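/- arXiv:2312.03570 — 5 statements merged into one kernel-verified Lean document; each statement's English description precedes it below -/
import Mathlib

section
/- Let z ∈ K^× satisfy |q| < |z| < |q|^{-1}. Then both infinite products defining the theta function θ(z) = ∏_{n≥0}(1 − qⁿ z^{-1}) · ∏_{n≥1}(1 − qⁿ z) converge in K (all but finitely many factors have absolute value 1 and the partial products converge), and |θ(z)| = |1 − z^{-1}|. -/
/-!
Each of the two products is, up to the single factor `1 - z⁻¹`, of the form
`∏ (1 - q ^ (n + 1) * w)` with `‖q‖ < 1` and `‖q * w‖ < 1` (take `w = z⁻¹` and `w = z`).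
Such a product converges since `∑ ‖q ^ (n + 1) * w‖` is a convergent geometric series, and every
factor has absolute value `1` by the ultrametric inequality; hence so does the product, by
continuity of the norm. Only the factor `1 - z⁻¹` contributes to the absolute value.
-/

open Metric

theorem multipliable_one_sub_pow_succ_mul {K : Type*} [NontriviallyNormedField K]
    [CompleteSpace K] {q : K} (hq1 : ‖q‖ < 1) (w : K) :
    Multipliable (fun n : ℕ => 1 - q ^ (n + 1) * w) := by
  have hs : Summable (fun n : ℕ => ‖-(q ^ (n + 1) * w)‖) := by
    have h := (summable_geometric_of_lt_one (norm_nonneg q) hq1).mul_right (‖q‖ * ‖w‖)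
    refine h.congr fun n => ?_
    rw [norm_neg, norm_mul, norm_pow]
    ring
  simpa only [sub_eq_add_neg] using multipliable_one_add_of_summable hs

theorem norm_one_sub_pow_succ_mul {K : Type*} [NontriviallyNormedField K]
    [IsUltrametricDist K] {q : K} (hq1 : ‖q‖ < 1) {w : K} (hw : ‖q * w‖ < 1) (n : ℕ) :
    ‖1 - q ^ (n + 1) * w‖ = 1 := by
  have h : ‖q ^ (n + 1) * w‖ < 1 := by
    calc ‖q ^ (n + 1) * w‖ = ‖q‖ ^ n * ‖q * w‖ := by
          rw [norm_mul, norm_mul, norm_pow]; ring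
      _ ≤ 1 * ‖q * w‖ := by gcongr; exact pow_le_one₀ (norm_nonneg q) hq1.le
      _ < 1 := by rwa [one_mul]
  have h1 : ‖(1 : K)‖ ≠ ‖-(q ^ (n + 1) * w)‖ := by
    rw [norm_one, norm_neg]; exact h.ne'
  rw [sub_eq_add_neg, IsUltrametricDist.norm_add_eq_max_of_norm_ne_norm h1, norm_one, norm_neg,
    max_eq_left h.le]

theorem norm_tprod_one_sub_pow_succ_mul {K : Type*} [NontriviallyNormedField K]
    [CompleteSpace K] [IsUltrametricDist K] {q : K} (hq1 : ‖q‖ < 1) {w : K}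
    (hw : ‖q * w‖ < 1) :
    ‖∏' n : ℕ, (1 - q ^ (n + 1) * w)‖ = 1 := by
  rw [(multipliable_one_sub_pow_succ_mul hq1 w).norm_tprod]
  simp only [norm_one_sub_pow_succ_mul hq1 hw, tprod_one]

/-- **Convergence and absolute value of the theta function.**
For `z ∈ Kˣ` with `|q| < |z| < |q|⁻¹`, both infinite products defining the theta function
`θ(z) = ∏_{n≥0} (1 - qⁿ z⁻¹) · ∏_{n≥1} (1 - qⁿ z)` converge in the nonarchimedean local
field `K`, and `|θ(z)| = |1 - z⁻¹|`. -/
theorem theta_multipliable_and_norm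
    {K : Type*} [NontriviallyNormedField K] [CompleteSpace K] [IsUltrametricDist K]
    (hK : IsCompact (closedBall (0 : K) 1))
    (q : K) (hq0 : q ≠ 0) (hq1 : ‖q‖ < 1)
    (z : K) (hz0 : z ≠ 0) (hz1 : ‖q‖ < ‖z‖) (hz2 : ‖z‖ < ‖q‖⁻¹) :
    Multipliable (fun n : ℕ => 1 - q ^ n * z⁻¹) ∧
      Multipliable (fun n : ℕ => 1 - q ^ (n + 1) * z) ∧
      ‖(∏' n : ℕ, (1 - q ^ n * z⁻¹)) * (∏' n : ℕ, (1 - q ^ (n + 1) * z))‖ = ‖1 - z⁻¹‖ := by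
  have hinv : ‖q * z⁻¹‖ < 1 := by
    rw [norm_mul, norm_inv, ← div_eq_mul_inv]
    exact (div_lt_one (norm_pos_iff.mpr hz0)).mpr hz1
  have hmul : ‖q * z‖ < 1 := by
    rw [norm_mul]
    calc ‖q‖ * ‖z‖ < ‖q‖ * ‖q‖⁻¹ := mul_lt_mul_of_pos_left hz2 (norm_pos_iff.mpr hq0)
      _ = 1 := mul_inv_cancel₀ (norm_ne_zero_iff.mpr hq0)
  have hs : Multipliable (fun n : ℕ => 1 - q ^ (n + 1) * z⁻¹) :=
    multipliable_one_sub_pow_succ_mul hq1 z⁻¹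
  refine ⟨?_, multipliable_one_sub_pow_succ_mul hq1 z, ?_⟩
  · -- Shifting the index by one needs no invertibility of the factor `1 - z⁻¹`, which may vanish.
    have h := hs.hasProd.zero_mul (f := fun n : ℕ => 1 - q ^ n * z⁻¹)
    exact h.multipliable
  · rw [tprod_eq_zero_mul' (f := fun n : ℕ => 1 - q ^ n * z⁻¹) hs, norm_mul, norm_mul,
      norm_tprod_one_sub_pow_succ_mul hq1 hinv, norm_tprod_one_sub_pow_succ_mul hq1 hmul]
    simp
end

section
/- Let x, y ∈ K^× satisfy |q| < |x^{-1}y| < |q|^{-1}, |q| < |xy| < |q|^{-1}, and xy ≠ 1. Then |θ(x^{-1}y)| · |θ(y^{-1}x)| / |θ(xy)|² = |x|·|y|·|x − y|² / |1 − xy|². -/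
/-!
On the annulus `|q| < |z| < |q|⁻¹` every factor of `θ(z)` other than `1 - z⁻¹` has the form
`1 - u` with `|u| < 1`, hence has absolute value `1` by the ultrametric inequality. The absolute
value is continuous and multiplicative, so `|θ(z)| = |1 - z⁻¹|` there (`norm_thetaFn`). The
annulus is stable under `z ↦ z⁻¹`, so this evaluates all three theta values, and the claimed
identity becomes an elementary one between absolute values.
-/

open Metric

/-- The theta function `θ(z) = ∏_{n≥0} (1 - qⁿ z⁻¹) · ∏_{n≥1} (1 - qⁿ z)` on `Kˣ`. -/
noncomputable def thetaFn {K : Type*} [NormedField K] (q z : K) : K :=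
  (∏' n : ℕ, (1 - q ^ n * z⁻¹)) * (∏' n : ℕ, (1 - q ^ (n + 1) * z))

/-- Summability of the geometric series makes the product converge in the complete field `K`. -/
lemma multipliable_theta_tail {K : Type*} [NontriviallyNormedField K] [CompleteSpace K]
    {q : K} (hq1 : ‖q‖ < 1) (w : K) : Multipliable fun n : ℕ => 1 - q ^ (n + 1) * w := by
  have hs : Summable fun n : ℕ => ‖-(q ^ (n + 1) * w)‖ := by
    have := (summable_geometric_of_lt_one (norm_nonneg q) hq1).mul_right (‖q‖ * ‖w‖)
    refine this.congr fun n => ?_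
    rw [norm_neg, norm_mul, norm_pow]
    ring
  simpa only [sub_eq_add_neg] using multipliable_one_add_of_summable hs

lemma norm_theta_tail {K : Type*} [NontriviallyNormedField K] [CompleteSpace K]
    [IsUltrametricDist K] {q : K} (hq1 : ‖q‖ < 1) {w : K} (hw : ‖q‖ * ‖w‖ < 1) :
    ‖∏' n : ℕ, (1 - q ^ (n + 1) * w)‖ = 1 := by
  have hfac : ∀ n : ℕ, ‖1 - q ^ (n + 1) * w‖ = 1 := by
    intro n
    have hlt : ‖q ^ (n + 1) * w‖ < 1 := by
      rw [norm_mul, norm_pow, pow_succ, mul_assoc]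
      exact (mul_le_of_le_one_left (by positivity)
        (pow_le_one₀ (norm_nonneg q) hq1.le)).trans_lt hw
    have hne : ‖(1 : K)‖ ≠ ‖-(q ^ (n + 1) * w)‖ := by
      rw [norm_one, norm_neg]
      exact hlt.ne'
    rw [sub_eq_add_neg, IsUltrametricDist.norm_add_eq_max_of_norm_ne_norm hne, norm_one,
      norm_neg, max_eq_left hlt.le]
  have hlim := ((multipliable_theta_tail hq1 w).hasProd).norm
  simp only [hfac] at hlim
  exact hlim.unique hasProd_one

/-- On the annulus `|q| < |z| < |q|⁻¹` only the factor `1 - z⁻¹` contributes to `|θ(z)|`. -/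
lemma norm_thetaFn {K : Type*} [NontriviallyNormedField K] [CompleteSpace K]
    [IsUltrametricDist K] {q : K} (hq0 : q ≠ 0) (hq1 : ‖q‖ < 1) {z : K}
    (h1 : ‖q‖ < ‖z‖) (h2 : ‖z‖ < ‖q‖⁻¹) : ‖thetaFn q z‖ = ‖1 - z⁻¹‖ := by
  have hq : 0 < ‖q‖ := norm_pos_iff.mpr hq0
  have hz : ‖q‖ * ‖z‖ < 1 := by
    rwa [← one_div, lt_div_iff₀' hq] at h2
  have hz' : ‖q‖ * ‖z⁻¹‖ < 1 := by
    rwa [norm_inv, ← div_eq_mul_inv, div_lt_one (hq.trans h1)]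
  have hsplit : ∏' n : ℕ, (1 - q ^ n * z⁻¹)
      = (1 - q ^ 0 * z⁻¹) * ∏' n : ℕ, (1 - q ^ (n + 1) * z⁻¹) :=
    tprod_eq_zero_mul' (f := fun n : ℕ => 1 - q ^ n * z⁻¹) (multipliable_theta_tail hq1 z⁻¹)
  rw [thetaFn, hsplit, norm_mul, norm_mul, norm_theta_tail hq1 hz, norm_theta_tail hq1 hz',
    pow_zero, one_mul, mul_one, mul_one]

/-- **Absolute value of the pre-kernel function.**
For `x, y ∈ Kˣ` with `|q| < |x⁻¹y| < |q|⁻¹`, `|q| < |xy| < |q|⁻¹` and `xy ≠ 1`, one has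
`|θ(x⁻¹y)|·|θ(y⁻¹x)| / |θ(xy)|² = |x|·|y|·|x − y|² / |1 − xy|²`. -/
theorem theta_kernel_norm
    {K : Type*} [NontriviallyNormedField K] [CompleteSpace K] [IsUltrametricDist K]
    (hK : IsCompact (closedBall (0 : K) 1))
    (q : K) (hq0 : q ≠ 0) (hq1 : ‖q‖ < 1)
    (x y : K) (hx0 : x ≠ 0) (hy0 : y ≠ 0)
    (h1 : ‖q‖ < ‖x⁻¹ * y‖) (h2 : ‖x⁻¹ * y‖ < ‖q‖⁻¹)
    (h3 : ‖q‖ < ‖x * y‖) (h4 : ‖x * y‖ < ‖q‖⁻¹)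
    (h5 : x * y ≠ 1) :
    ‖thetaFn q (x⁻¹ * y)‖ * ‖thetaFn q (y⁻¹ * x)‖ / ‖thetaFn q (x * y)‖ ^ 2
      = ‖x‖ * ‖y‖ * ‖x - y‖ ^ 2 / ‖1 - x * y‖ ^ 2 := by
  have hq : 0 < ‖q‖ := norm_pos_iff.mpr hq0
  have hinv : y⁻¹ * x = (x⁻¹ * y)⁻¹ := by rw [mul_inv, inv_inv, mul_comm]
  have h1' : ‖q‖ < ‖y⁻¹ * x‖ := by
    rw [hinv, norm_inv]
    exact (lt_inv_comm₀ (hq.trans h1) hq).mp h2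
  have h2' : ‖y⁻¹ * x‖ < ‖q‖⁻¹ := by
    rw [hinv, norm_inv]
    exact (inv_lt_inv₀ (hq.trans h1) hq).mpr h1
  rw [norm_thetaFn hq0 hq1 h1 h2, norm_thetaFn hq0 hq1 h1' h2', norm_thetaFn hq0 hq1 h3 h4]
  have e1 : 1 - (x⁻¹ * y)⁻¹ = -(x - y) / y := by field_simp; ring
  have e2 : 1 - (y⁻¹ * x)⁻¹ = (x - y) / x := by field_simp
  have e3 : 1 - (x * y)⁻¹ = -(1 - x * y) / (x * y) := by field_simp; ring
  have hx : ‖x‖ ≠ 0 := norm_ne_zero_iff.mpr hx0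
  have hy : ‖y‖ ≠ 0 := norm_ne_zero_iff.mpr hy0
  have hxy : ‖1 - x * y‖ ≠ 0 := norm_ne_zero_iff.mpr (sub_ne_zero.mpr h5.symm)
  rw [e1, e2, e3]
  simp only [norm_div, norm_neg]
  rw [norm_mul x y]
  field_simp
end

section
/- For every u ∈ K^× with u ≠ 1 and |q| < |u| ≤ 1, the series defining X(u,q), Y(u,q) and the termwise derivative X_u(u,q) converge in K, and |X_u(u,q)| = |u|^{-1} · |2·Y(u,q) + X(u,q)|. (Equivalently: the measure |ω| on the annulus {|q| < |u| ≤ 1} associated with the invariant differential ω = dX/(2Y + X) of the Tate curve has density |u|^{-1} with respect to the additive Haar measure, i.e. |ω(u)| = |du|/|u|.) -/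
/-!
Termwise, `2Y + X = u · X_u`: the coefficient of `u ^ m` is `(m - 1)m + m = m²`, that of `u⁻¹ ^ m`
is `-m(m + 1) + m = -m²`, the constants cancel, and the leading rational functions satisfy the
same identity (`two_mul_tateYterm_add_tateXterm` is the termwise form). Hence the norm identity
follows by taking norms, once the series converge.

Convergence holds because `K` is ultrametric: integers have norm at most `1`, so the coefficient
of `q ^ d` in each series is bounded by `‖u‖⁻¹ ^ (d + 1)`, and `‖q‖ < ‖u‖` makes the series
geometrically dominated (`summable_divisorSum`).
-/

open Metric Finset

/-- The `d`-th term (`d ≥ 1`, indexed by `d = e + 1`) of the series for the Tate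
coordinate `X(u,q) = u/(1−u)² + ∑_{d≥1} (∑_{m∣d} m(uᵐ + u⁻ᵐ − 2)) q^d`. -/
noncomputable def tateXterm {K : Type*} [NormedField K] (q u : K) (e : ℕ) : K :=
  (∑ m ∈ (e + 1).divisors, (m : K) * (u ^ m + u⁻¹ ^ m - 2)) * q ^ (e + 1)

/-- The `d`-th term (`d ≥ 1`, indexed by `d = e + 1`) of the series for the Tate coordinate
`Y(u,q) = u²/(1−u)³ + ∑_{d≥1} (∑_{m∣d} ((m−1)m/2·uᵐ − m(m+1)/2·u⁻ᵐ + m)) q^d`. -/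
noncomputable def tateYterm {K : Type*} [NormedField K] (q u : K) (e : ℕ) : K :=
  (∑ m ∈ (e + 1).divisors,
      ((((m - 1) * m / 2 : ℕ) : K) * u ^ m - (((m * (m + 1) / 2 : ℕ)) : K) * u⁻¹ ^ m + (m : K)))
    * q ^ (e + 1)

/-- The `d`-th term (`d ≥ 1`, indexed by `d = e + 1`) of the series for the termwise
`u`-derivative `X_u(u,q) = (1+u)/(1−u)³ + ∑_{d≥1} (∑_{m∣d} m²(u^{m−1} − u^{−m−1})) q^d`. -/
noncomputable def tateXuterm {K : Type*} [NormedField K] (q u : K) (e : ℕ) : K :=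
  (∑ m ∈ (e + 1).divisors, (m : K) ^ 2 * (u ^ (m - 1) - u⁻¹ ^ (m + 1))) * q ^ (e + 1)

/-- The Tate coordinate `X(u,q)`. -/
noncomputable def tateX {K : Type*} [NormedField K] (q u : K) : K :=
  u / (1 - u) ^ 2 + ∑' e : ℕ, tateXterm q u e

/-- The Tate coordinate `Y(u,q)`. -/
noncomputable def tateY {K : Type*} [NormedField K] (q u : K) : K :=
  u ^ 2 / (1 - u) ^ 3 + ∑' e : ℕ, tateYterm q u e

/-- The termwise `u`-derivative `X_u(u,q)` of the Tate coordinate `X(u,q)`. -/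
noncomputable def tateXu {K : Type*} [NormedField K] (q u : K) : K :=
  (1 + u) / (1 - u) ^ 3 + ∑' e : ℕ, tateXuterm q u e

/-- A Lambert-type series `∑_{d ≥ 1} (∑_{m ∣ d} F m) q ^ d` converges as soon as
`‖F m‖ ≤ ‖u‖⁻¹ ^ (m + 1)` for some `u` with `‖q‖ < ‖u‖ ≤ 1`, the ultrametric inequality bounding
the divisor sum by its largest possible term. -/
theorem summable_divisorSum {K : Type*} [NormedField K] [CompleteSpace K] [IsUltrametricDist K]
    {q u : K} (hul : ‖q‖ < ‖u‖) (huu : ‖u‖ ≤ 1) (F : ℕ → K)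
    (hF : ∀ m, ‖F m‖ ≤ ‖u‖⁻¹ ^ (m + 1)) :
    Summable fun e : ℕ => (∑ m ∈ (e + 1).divisors, F m) * q ^ (e + 1) := by
  have hpos : 0 < ‖u‖ := (norm_nonneg q).trans_lt hul
  have h1 : 1 ≤ ‖u‖⁻¹ := (one_le_inv₀ hpos).2 huu
  have hr : ‖q‖ * ‖u‖⁻¹ < 1 := by
    rw [← div_eq_mul_inv]
    exact (div_lt_one hpos).2 hul
  have hgeom : Summable fun e : ℕ => ‖u‖⁻¹ * (‖q‖ * ‖u‖⁻¹) ^ (e + 1) :=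
    ((summable_nat_add_iff 1).2 (summable_geometric_of_lt_one (by positivity) hr)).mul_left _
  refine Summable.of_norm_bounded hgeom fun e => ?_
  have hsum : ‖∑ m ∈ (e + 1).divisors, F m‖ ≤ ‖u‖⁻¹ ^ (e + 2) := by
    refine IsUltrametricDist.norm_sum_le_of_forall_le_of_nonneg (by positivity) fun m hm => ?_
    exact (hF m).trans
      (pow_le_pow_right₀ h1 (Nat.succ_le_succ (Nat.divisor_le hm)))
  calc ‖(∑ m ∈ (e + 1).divisors, F m) * q ^ (e + 1)‖
      ≤ ‖u‖⁻¹ ^ (e + 2) * ‖q‖ ^ (e + 1) := by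
        rw [norm_mul, norm_pow]
        gcongr
    _ = ‖u‖⁻¹ * (‖q‖ * ‖u‖⁻¹) ^ (e + 1) := by ring

theorem norm_natCast_mul_le {K : Type*} [NormedField K] [IsUltrametricDist K] (n : ℕ) {x : K}
    {B : ℝ} (hx : ‖x‖ ≤ B) : ‖(n : K) * x‖ ≤ B := by
  rw [norm_mul]
  exact (mul_le_of_le_one_left (norm_nonneg x)
    (IsUltrametricDist.norm_natCast_le_one K n)).trans hx

theorem two_mul_tateYterm_add_tateXterm {K : Type*} [NormedField K] (q : K) {u : K} (hu0 : u ≠ 0)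
    (e : ℕ) : 2 * tateYterm q u e + tateXterm q u e = u * tateXuterm q u e := by
  unfold tateYterm tateXterm tateXuterm
  rw [← mul_assoc, ← mul_assoc, ← add_mul, mul_sum, mul_sum, ← sum_add_distrib]
  congr 1
  refine sum_congr rfl fun m hm => ?_
  obtain ⟨k, rfl⟩ := Nat.exists_eq_add_one.2 (Nat.pos_of_mem_divisors hm)
  -- The halves in `Y` are exact natural-number divisions, so doubling recovers the products.
  have h1 : (2 : K) * (((k + 1 - 1) * (k + 1) / 2 : ℕ) : K) = k * (k + 1) := by
    have := Nat.mul_div_cancel' (Nat.even_mul_succ_self k).two_dvd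
    exact_mod_cast congrArg (Nat.cast : ℕ → K) this
  have h2 : (2 : K) * (((k + 1) * (k + 1 + 1) / 2 : ℕ) : K) = (k + 1) * (k + 2) := by
    have := Nat.mul_div_cancel' (Nat.even_mul_succ_self (k + 1)).two_dvd
    exact_mod_cast congrArg (Nat.cast : ℕ → K) this
  have h3 : u * u⁻¹ ^ (k + 1 + 1) = u⁻¹ ^ (k + 1) := by
    rw [pow_succ' _ (k + 1), mul_inv_cancel_left₀ hu0]
  rw [Nat.add_sub_cancel] at *
  push_cast
  linear_combination u ^ (k + 1) * h1 - u⁻¹ ^ (k + 1) * h2 + ((k : K) + 1) ^ 2 * h3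

/-- **Density of the invariant measure of the Tate curve.**
For `u ∈ Kˣ`, `u ≠ 1`, with `|q| < |u| ≤ 1`, the series for `X(u,q)`, `Y(u,q)` and the
termwise derivative `X_u(u,q)` converge, and `|X_u(u,q)| = |u|⁻¹ · |2·Y(u,q) + X(u,q)|`;
i.e. the measure `|ω|` attached to `ω = dX/(2Y + X)` has density `|u|⁻¹` with respect to
additive Haar measure on the annulus `{|q| < |u| ≤ 1}`. -/
theorem tate_invariant_differential_density
    {K : Type*} [NontriviallyNormedField K] [CompleteSpace K] [IsUltrametricDist K]
    (hK : IsCompact (closedBall (0 : K) 1))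
    (q : K) (hq0 : q ≠ 0) (hq1 : ‖q‖ < 1)
    (u : K) (hu0 : u ≠ 0) (hu1 : u ≠ 1) (hul : ‖q‖ < ‖u‖) (huu : ‖u‖ ≤ 1) :
    Summable (tateXterm q u) ∧ Summable (tateYterm q u) ∧ Summable (tateXuterm q u) ∧
      ‖tateXu q u‖ = ‖u‖⁻¹ * ‖2 * tateY q u + tateX q u‖ := by
  have hpos : 0 < ‖u‖ := norm_pos_iff.2 hu0
  have h1 : 1 ≤ ‖u‖⁻¹ := (one_le_inv₀ hpos).2 huu
  have hB : ∀ n : ℕ, (1 : ℝ) ≤ ‖u‖⁻¹ ^ n := fun n => one_le_pow₀ h1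
  have hu : ∀ n k : ℕ, ‖u ^ n‖ ≤ ‖u‖⁻¹ ^ k := fun n k => by
    rw [norm_pow]
    exact (pow_le_one₀ (norm_nonneg u) huu).trans (hB k)
  have hui : ∀ n k : ℕ, n ≤ k → ‖u⁻¹ ^ n‖ ≤ ‖u‖⁻¹ ^ k := fun n k h => by
    rw [norm_pow, norm_inv]
    exact pow_le_pow_right₀ h1 h
  have hnat : ∀ n k : ℕ, ‖(n : K)‖ ≤ ‖u‖⁻¹ ^ k := fun n k =>
    (IsUltrametricDist.norm_natCast_le_one K n).trans (hB k)
  have hadd : ∀ {x y : K} {B : ℝ}, ‖x‖ ≤ B → ‖y‖ ≤ B → ‖x + y‖ ≤ B := fun hx hy =>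
    (IsUltrametricDist.norm_add_le_max _ _).trans (max_le hx hy)
  have hsub : ∀ {x y : K} {B : ℝ}, ‖x‖ ≤ B → ‖y‖ ≤ B → ‖x - y‖ ≤ B := fun hx hy => by
    rw [sub_eq_add_neg]
    exact hadd hx ((norm_neg _).trans_le hy)
  have hX : Summable (tateXterm q u) := summable_divisorSum hul huu _ fun m =>
    norm_natCast_mul_le m
      (hsub (hadd (hu _ _) (hui _ _ m.le_succ)) (by exact_mod_cast hnat 2 (m + 1)))
  have hY : Summable (tateYterm q u) := summable_divisorSum hul huu _ fun m =>
    hadd (hsub (norm_natCast_mul_le _ (hu _ _)) (norm_natCast_mul_le _ (hui _ _ m.le_succ)))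
      (hnat _ _)
  have hXu : Summable (tateXuterm q u) := summable_divisorSum hul huu _ fun m => by
    rw [← Nat.cast_pow]
    exact norm_natCast_mul_le _ (hsub (hu _ _) (hui _ _ le_rfl))
  refine ⟨hX, hY, hXu, ?_⟩
  have hseries : 2 * ∑' e, tateYterm q u e + ∑' e, tateXterm q u e
      = u * ∑' e, tateXuterm q u e := by
    rw [← tsum_mul_left, ← tsum_mul_left, ← (hY.mul_left 2).tsum_add hX]
    exact tsum_congr (two_mul_tateYterm_add_tateXterm q hu0)
  have hlead : 2 * (u ^ 2 / (1 - u) ^ 3) + u / (1 - u) ^ 2 = u * ((1 + u) / (1 - u) ^ 3) := by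
    have : 1 - u ≠ 0 := sub_ne_zero.2 hu1.symm
    field_simp
    ring
  have key : 2 * tateY q u + tateX q u = u * tateXu q u := by
    unfold tateY tateX tateXu
    linear_combination hseries + hlead
  rw [key, norm_mul, inv_mul_cancel_left₀ hpos.ne']
end

section
/- The matrix L is symmetric and diagonalizable over ℝ; all of its nonzero eigenvalues are negative real numbers; and its eigenspace for the eigenvalue 0 consists exactly of the constant vectors (the scalar multiples of (1, 1, …, 1)). -/
/-!
The kernel `H(π^k, y)` depends only on the circle `S_j` containing `y` as soon as `j ≠ k`: by the
ultrametric inequality `|1 - π^k y| = 1` when `|π^k y| < 1`, and `|π^k - y| = |π|^(min k j)`.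
The annulus is the disjoint union of the circles `S_0, …, S_(n-1)`, and each of them has
multiplicative measure `1 - |π|`. Hence the heat matrix acts by
`(L v)_k = ∑_j W_{kj} (v_j - v_k)`, with `W_{kj} = (1 - |π|) * circleWeight |π| n k j` symmetric and
positive (`heatMatrix_apply`).

Such a matrix is minus the Laplacian of a complete weighted graph. It is symmetric, so the spectral
theorem diagonalizes it, and the Dirichlet form identity
`2 ⟨v, L v⟩ = -∑_{k,j} W_{kj} (v_k - v_j)²` shows that it is negative semidefinite with kernel
exactly the constant vectors (`laplacian_spectral`).
-/

open Metric MeasureTheory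

noncomputable section

/-- The fundamental annulus `A = {u ∈ K : |q| < |u| ≤ 1}` of the Tate curve. -/
def tateAnnulus {K : Type*} [NormedField K] (q : K) : Set K :=
  {u : K | ‖q‖ < ‖u‖ ∧ ‖u‖ ≤ 1}

/-- The multiplicative measure `ν`, with density `|u|⁻¹` w.r.t. the Haar measure `μ`. -/
def multMeasure {K : Type*} [NormedField K] [MeasurableSpace K] (μ : Measure K) : Measure K :=
  μ.withDensity fun u => ENNReal.ofReal ‖u‖⁻¹

/-- The theta kernel `H(x,y)` on the fundamental annulus:
`H(x,y) = 1` if `|xy| = 1` or `|xy| = |q|`, and `H(x,y) = |xy|·|x−y|²/|1−xy|²` otherwise. -/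
def thetaKernel {K : Type*} [NormedField K] (q x y : K) : ℝ :=
  if ‖x * y‖ = 1 ∨ ‖x * y‖ = ‖q‖ then 1
  else ‖x * y‖ * ‖x - y‖ ^ 2 / ‖1 - x * y‖ ^ 2

/-- The real-valued indicator function of the circle `S_ℓ = {u : ‖u‖ = ‖π‖^ℓ}`. -/
def circleIndicator {K : Type*} [NormedField K] (π : K) (ℓ : ℕ) (y : K) : ℝ :=
  if ‖y‖ = ‖π‖ ^ ℓ then 1 else 0

/-- The `v(q) × v(q)` matrix `L` with entries
`L_{k,ℓ} = H_θ 1_{S_ℓ}(π^k) = ∫_A H(π^k,y)(1_{S_ℓ}(y) − 1_{S_ℓ}(π^k)) dν(y)`. -/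
def heatMatrix {K : Type*} [NormedField K] [MeasurableSpace K] (π : K) (μ : Measure K)
    (q : K) (n : ℕ) : Matrix (Fin n) (Fin n) ℝ :=
  fun k ℓ => ∫ y in tateAnnulus q,
    thetaKernel q (π ^ (k : ℕ)) y *
      (circleIndicator π ℓ y - circleIndicator π ℓ (π ^ (k : ℕ))) ∂(multMeasure μ)

end

/-! ### Weighted graph Laplacians -/

/-- The quadratic form of `v ↦ (k ↦ ∑ j, W k j * (v j - v k))` with symmetric weights `W` is
minus half the Dirichlet form; it is therefore nonpositive as soon as the weights are
nonnegative. -/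
lemma laplacian_dirichlet {n : ℕ} (W : Fin n → Fin n → ℝ) (hW : ∀ k j, W k j = W j k)
    (v : Fin n → ℝ) :
    2 * ∑ k, v k * ∑ j, W k j * (v j - v k) = -∑ k, ∑ j, W k j * (v k - v j) ^ 2 := by
  have hswap : ∑ k, ∑ j, W k j * (v k * (v j - v k)) = ∑ k, ∑ j, W k j * (v j * (v k - v j)) := by
    rw [Finset.sum_comm]
    refine Finset.sum_congr rfl fun k _ => Finset.sum_congr rfl fun j _ => ?_
    rw [hW j k]
  have hexpand : ∑ k, v k * ∑ j, W k j * (v j - v k) =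
      ∑ k, ∑ j, W k j * (v k * (v j - v k)) := by
    refine Finset.sum_congr rfl fun k _ => ?_
    rw [Finset.mul_sum]
    exact Finset.sum_congr rfl fun j _ => by ring
  rw [two_mul]
  nth_rewrite 2 [hexpand]
  rw [hswap, hexpand, ← Finset.sum_add_distrib, ← Finset.sum_neg_distrib]
  refine Finset.sum_congr rfl fun k _ => ?_
  rw [← Finset.sum_add_distrib, ← Finset.sum_neg_distrib]
  exact Finset.sum_congr rfl fun j _ => by ring

/-- The spectral properties hold for the (negative) Laplacian of any complete graph with
symmetric positive weights. -/
lemma laplacian_spectral {n : ℕ} (W : Fin n → Fin n → ℝ) (hW : ∀ k j, W k j = W j k)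
    (hpos : ∀ k j, 0 < W k j) (L : Matrix (Fin n) (Fin n) ℝ)
    (hL : ∀ k ℓ, L k ℓ = ∑ j, W k j * ((if j = ℓ then 1 else 0) - if k = ℓ then 1 else 0)) :
    L.IsSymm ∧
    (∃ (P : Matrix (Fin n) (Fin n) ℝ) (d : Fin n → ℝ),
        IsUnit P.det ∧ L = P * Matrix.diagonal d * P⁻¹) ∧
    (∀ (c : ℝ) (v : Fin n → ℝ), v ≠ 0 → L.mulVec v = c • v → c ≠ 0 → c < 0) ∧
    (∀ v : Fin n → ℝ, L.mulVec v = 0 ↔ ∃ t : ℝ, v = fun _ => t) := by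
  have hsymm : L.IsSymm := by
    ext k ℓ
    rw [Matrix.transpose_apply]
    by_cases h : k = ℓ
    · rw [h]
    · rw [hL, hL]
      simp [h, Ne.symm h, hW k ℓ]
  have hmul : ∀ (v : Fin n → ℝ) k, L.mulVec v k = ∑ j, W k j * (v j - v k) := by
    intro v k
    simp only [Matrix.mulVec, dotProduct, hL, Finset.sum_mul]
    rw [Finset.sum_comm]
    refine Finset.sum_congr rfl fun j _ => ?_
    simp [mul_assoc, ← Finset.mul_sum, sub_mul, Finset.sum_sub_distrib]
  have hform : ∀ v : Fin n → ℝ,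
      2 * ∑ k, v k * L.mulVec v k = -∑ k, ∑ j, W k j * (v k - v j) ^ 2 := by
    intro v
    simp only [hmul]
    exact laplacian_dirichlet W hW v
  have hterm : ∀ (v : Fin n → ℝ) k j, 0 ≤ W k j * (v k - v j) ^ 2 := fun v k j =>
    mul_nonneg (hpos k j).le (sq_nonneg _)
  refine ⟨hsymm, ?_, ?_, ?_⟩
  · have hH : L.IsHermitian := by
      rw [Matrix.IsHermitian, Matrix.conjTranspose_eq_transpose_of_trivial]
      exact hsymm
    have hU := Matrix.mem_unitaryGroup_iff.1 hH.eigenvectorUnitary.2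
    refine ⟨hH.eigenvectorUnitary, hH.eigenvalues, ?_, ?_⟩
    · exact (Matrix.isUnit_iff_isUnit_det _).1 (IsUnit.of_mul_eq_one _ hU)
    · rw [Matrix.inv_eq_right_inv hU]
      exact hH.spectral_theorem
  · intro c v hv hc hc0
    refine lt_of_le_of_ne ?_ hc0
    have h := hform v
    rw [hc] at h
    have h1 : ∑ k, v k * (c • v) k = c * ∑ k, v k ^ 2 := by
      rw [Finset.mul_sum]
      exact Finset.sum_congr rfl fun k _ => by simp; ring
    have h2 : 0 ≤ ∑ k, ∑ j, W k j * (v k - v j) ^ 2 :=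
      Finset.sum_nonneg fun k _ => Finset.sum_nonneg fun j _ => hterm v k j
    have h3 : 0 < ∑ k, v k ^ 2 := by
      obtain ⟨i, hi⟩ := Function.ne_iff.1 hv
      exact Finset.sum_pos' (fun k _ => sq_nonneg _) ⟨i, Finset.mem_univ _, by
        have : v i ≠ 0 := hi
        positivity⟩
    rw [h1] at h
    by_contra hcon
    push Not at hcon
    nlinarith [mul_pos hcon h3]
  · intro v
    constructor
    · intro h0
      have h := hform v
      rw [h0] at h
      have hz : ∑ k, ∑ j, W k j * (v k - v j) ^ 2 = 0 := by
        simpa using h.symm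
      have hall : ∀ k j, v k = v j := by
        intro k j
        have a := (Finset.sum_eq_zero_iff_of_nonneg fun k _ =>
          Finset.sum_nonneg fun j _ => hterm v k j).1 hz k (Finset.mem_univ _)
        have b := (Finset.sum_eq_zero_iff_of_nonneg fun j _ => hterm v k j).1 a j
          (Finset.mem_univ _)
        have c := (mul_eq_zero.1 b).resolve_left (hpos k j).ne'
        exact sub_eq_zero.1 (pow_eq_zero_iff two_ne_zero |>.1 c)
      rcases n with _ | n
      · exact ⟨0, Subsingleton.elim _ _⟩
      · exact ⟨v 0, funext fun k => hall k 0⟩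
    · rintro ⟨t, rfl⟩
      ext k
      simp [hmul]

/-! ### The circles in the annulus -/

/-- The value of the theta kernel at any pair of points on two distinct circles `S_k`, `S_j`,
where `r = |π|`. -/
noncomputable def circleWeight (r : ℝ) (n k j : ℕ) : ℝ :=
  if k + j = 0 ∨ k + j = n then 1 else r ^ (k + j) * (r ^ min k j) ^ 2

lemma circleWeight_comm (r : ℝ) (n k j : ℕ) : circleWeight r n k j = circleWeight r n j k := by
  simp only [circleWeight, add_comm k j, min_comm k j]

lemma circleWeight_pos {r : ℝ} (hr : 0 < r) (n k j : ℕ) : 0 < circleWeight r n k j := by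
  unfold circleWeight
  split_ifs <;> positivity

section circles

variable {K : Type*} [NontriviallyNormedField K] {π : K}

lemma norm_pow_inj (hπ1 : ‖π‖ < 1) (hπ0 : 0 < ‖π‖) {i j : ℕ} :
    ‖π‖ ^ i = ‖π‖ ^ j ↔ i = j :=
  pow_right_inj₀ hπ0 hπ1.ne

/-- The value group is generated by `|π|`, so the annulus is the union of `n` circles. -/
lemma exists_circle (hπ1 : ‖π‖ < 1) (hπ0 : 0 < ‖π‖) (hπmax : ∀ x : K, ‖x‖ < 1 → ‖x‖ ≤ ‖π‖)
    {q : K} {n : ℕ} (hq : ‖q‖ = ‖π‖ ^ n) {y : K} (hy : y ∈ tateAnnulus q) :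
    ∃ j : Fin n, ‖y‖ = ‖π‖ ^ (j : ℕ) := by
  obtain ⟨hy1, hy2⟩ := hy
  obtain ⟨j, hj1, hj2⟩ :=
    exists_nat_pow_near_of_lt_one ((norm_nonneg q).trans_lt hy1) hy2 hπ0 hπ1
  have hj : ‖y‖ = ‖π‖ ^ j := by
    refine le_antisymm hj2 ?_
    by_contra hlt
    push Not at hlt
    have hp : 0 < ‖π‖ ^ j := pow_pos hπ0 j
    have h1 : ‖y / π ^ j‖ < 1 := by
      rw [norm_div, norm_pow, div_lt_one hp]
      exact hlt
    have h2 := hπmax _ h1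
    rw [norm_div, norm_pow, div_le_iff₀ hp, ← pow_succ'] at h2
    exact absurd hj1 (not_lt.2 h2)
  refine ⟨⟨j, ?_⟩, hj⟩
  rw [hq, hj] at hy1
  exact (pow_lt_pow_iff_right_of_lt_one₀ hπ0 hπ1).1 hy1

lemma circle_subset (hπ1 : ‖π‖ < 1) (hπ0 : 0 < ‖π‖) {q : K} {n : ℕ} (hq : ‖q‖ = ‖π‖ ^ n)
    (j : Fin n) : {u : K | ‖u‖ = ‖π‖ ^ (j : ℕ)} ⊆ tateAnnulus q := by
  intro y hy
  rw [Set.mem_ofPred_eq] at hy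
  refine ⟨?_, ?_⟩
  · rw [hq, hy]
    exact pow_lt_pow_right_of_lt_one₀ hπ0 hπ1 j.2
  · rw [hy]
    exact pow_le_one₀ hπ0.le hπ1.le

lemma norm_sub_eq_max [IsUltrametricDist K] {x y : K} (h : ‖x‖ ≠ ‖y‖) :
    ‖x - y‖ = max ‖x‖ ‖y‖ := by
  rw [sub_eq_add_neg, IsUltrametricDist.norm_add_eq_max_of_norm_ne_norm (by rwa [norm_neg]),
    norm_neg]

lemma thetaKernel_circle [IsUltrametricDist K] (hπ1 : ‖π‖ < 1) (hπ0 : 0 < ‖π‖)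
    {q : K} {n : ℕ} (hq : ‖q‖ = ‖π‖ ^ n) {k j : ℕ} (hkj : k ≠ j) {y : K}
    (hy : ‖y‖ = ‖π‖ ^ j) :
    thetaKernel q (π ^ k) y = circleWeight ‖π‖ n k j := by
  have hxy : ‖π ^ k * y‖ = ‖π‖ ^ (k + j) := by
    rw [norm_mul, norm_pow, hy, pow_add]
  have hone : ‖π‖ ^ (k + j) = 1 ↔ k + j = 0 := by
    rw [← norm_pow_inj hπ1 hπ0, pow_zero]
  unfold thetaKernel circleWeight
  simp only [hxy, hq, hone, norm_pow_inj hπ1 hπ0]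
  split_ifs with h
  · rfl
  · push Not at h
    have hlt : ‖π ^ k * y‖ < 1 := by
      rw [hxy]
      exact pow_lt_one₀ hπ0.le hπ1 h.1
    have h1 : ‖1 - π ^ k * y‖ = 1 := by
      rw [norm_sub_eq_max (by rw [norm_one]; exact hlt.ne'),
        norm_one, max_eq_left hlt.le]
    have h2 : ‖π ^ k - y‖ = ‖π‖ ^ min k j := by
      rw [norm_sub_eq_max
        (by rw [norm_pow, hy]; exact fun e => hkj ((norm_pow_inj hπ1 hπ0).1 e)), norm_pow, hy]
      rcases le_total k j with hle | hle
      · rw [min_eq_left hle, max_eq_left (pow_le_pow_of_le_one hπ0.le hπ1.le hle)]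
      · rw [min_eq_right hle, max_eq_right (pow_le_pow_of_le_one hπ0.le hπ1.le hle)]
    rw [h1, h2]
    simp

variable [MeasurableSpace K] [BorelSpace K]

lemma measurableSet_circle (j : ℕ) : MeasurableSet {u : K | ‖u‖ = ‖π‖ ^ j} :=
  (isClosed_eq continuous_norm continuous_const).measurableSet

/-- All circles have the same multiplicative measure: `S_j = π^j S_0`, whose additive measure
`|π|^j μ(S_0)` is compensated by the density, and `S_0` is the unit ball minus `π` times the
unit ball. -/
lemma multMeasure_circle (hπ1 : ‖π‖ < 1) (hπ0 : 0 < ‖π‖)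
    (hπmax : ∀ x : K, ‖x‖ < 1 → ‖x‖ ≤ ‖π‖)
    {μ : Measure K} (hnorm : μ (closedBall (0 : K) 1) = 1)
    (hscale : ∀ a : K, a ≠ 0 → ∀ s : Set K, MeasurableSet s →
      μ ((a * ·) '' s) = ENNReal.ofReal ‖a‖ * μ s) (j : ℕ) :
    multMeasure μ {u : K | ‖u‖ = ‖π‖ ^ j} = ENNReal.ofReal (1 - ‖π‖) := by
  have hπ : π ≠ 0 := norm_pos_iff.1 hπ0
  have himage : ∀ (a : K), a ≠ 0 → ∀ s : Set K, (a * ·) '' s = {u | a⁻¹ * u ∈ s} := by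
    intro a ha s
    ext u
    constructor
    · rintro ⟨w, hw, rfl⟩
      simpa [ha] using hw
    · intro hu
      exact ⟨a⁻¹ * u, hu, by simp [ha]⟩
  have hball : MeasurableSet (closedBall (0 : K) 1) := isClosed_closedBall.measurableSet
  have hπball : (π * ·) '' closedBall (0 : K) 1 = closedBall (0 : K) ‖π‖ := by
    rw [himage π hπ]
    ext u
    simp only [Set.mem_ofPred_eq, mem_closedBall_zero_iff, norm_mul, norm_inv]
    rw [inv_mul_le_iff₀ hπ0, mul_one]
  have hzero : {u : K | ‖u‖ = ‖π‖ ^ 0} = closedBall (0 : K) 1 \ closedBall (0 : K) ‖π‖ := by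
    ext u
    simp only [pow_zero, Set.mem_ofPred_eq, Set.mem_sdiff, mem_closedBall_zero_iff, not_le]
    refine ⟨fun h => ⟨h.le, h ▸ hπ1⟩, fun h => le_antisymm h.1 ?_⟩
    by_contra hlt
    exact absurd (hπmax u (not_le.1 hlt)) (not_le.2 h.2)
  have hsmall : μ (closedBall (0 : K) ‖π‖) = ENNReal.ofReal ‖π‖ := by
    rw [← hπball, hscale π hπ _ hball, hnorm, mul_one]
  have hμ0 : μ {u : K | ‖u‖ = ‖π‖ ^ 0} = ENNReal.ofReal (1 - ‖π‖) := by
    rw [hzero, measure_sdiff (closedBall_subset_closedBall hπ1.le)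
      isClosed_closedBall.measurableSet.nullMeasurableSet (by simp [hsmall]), hnorm, hsmall,
      ENNReal.ofReal_sub _ hπ0.le, ENNReal.ofReal_one]
  have hp : 0 < ‖π‖ ^ j := pow_pos hπ0 j
  have hμj : μ {u : K | ‖u‖ = ‖π‖ ^ j} =
      ENNReal.ofReal (‖π‖ ^ j) * ENNReal.ofReal (1 - ‖π‖) := by
    rw [← hμ0, ← norm_pow π j, ← hscale (π ^ j) (pow_ne_zero j hπ) _ (measurableSet_circle 0),
      himage _ (pow_ne_zero j hπ)]
    congr 1
    ext u
    simp only [Set.mem_ofPred_eq, norm_mul, norm_inv, norm_pow, pow_zero]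
    rw [inv_mul_eq_one₀ hp.ne', eq_comm]
  unfold multMeasure
  rw [withDensity_apply _ (measurableSet_circle j),
    setLIntegral_congr_fun (g := fun _ => ENNReal.ofReal (‖π‖ ^ j)⁻¹) (measurableSet_circle j)
      (fun u hu => by
        have hu' : ‖u‖ = ‖π‖ ^ j := hu
        simp only [hu']),
    setLIntegral_const, hμj, ← mul_assoc, ← ENNReal.ofReal_mul (inv_nonneg.2 hp.le),
    inv_mul_cancel₀ hp.ne', ENNReal.ofReal_one, one_mul]

/-- The integrand defining `L_{k,ℓ}` is constant on each circle. On `S_k` itself, where the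
kernel is not constant, the difference of indicators vanishes. -/
lemma heatMatrix_apply [IsUltrametricDist K] (hπ1 : ‖π‖ < 1) (hπ0 : 0 < ‖π‖)
    (hπmax : ∀ x : K, ‖x‖ < 1 → ‖x‖ ≤ ‖π‖)
    {μ : Measure K} (hnorm : μ (closedBall (0 : K) 1) = 1)
    (hscale : ∀ a : K, a ≠ 0 → ∀ s : Set K, MeasurableSet s →
      μ ((a * ·) '' s) = ENNReal.ofReal ‖a‖ * μ s)
    {q : K} {n : ℕ} (hq : ‖q‖ = ‖π‖ ^ n) (k ℓ : Fin n) :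
    heatMatrix π μ q n k ℓ = ∑ j : Fin n, (1 - ‖π‖) * circleWeight ‖π‖ n k j *
      ((if j = ℓ then 1 else 0) - if k = ℓ then 1 else 0) := by
  set c : Fin n → ℝ := fun j => circleWeight ‖π‖ n k j *
    ((if j = ℓ then 1 else 0) - if k = ℓ then 1 else 0) with hc
  have hA : MeasurableSet (tateAnnulus q) :=
    ((isOpen_lt continuous_const continuous_norm).measurableSet).inter
      ((isClosed_le continuous_norm continuous_const).measurableSet)
  have hind : ∀ (i : Fin n) (y : K), ‖y‖ = ‖π‖ ^ (i : ℕ) →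
      circleIndicator π ℓ y = if i = ℓ then 1 else 0 := by
    intro i y hy
    simp only [circleIndicator, hy, norm_pow_inj hπ1 hπ0, Fin.ext_iff]
  have hmeas : ∀ j : Fin n, (multMeasure μ).restrict (tateAnnulus q)
      {u : K | ‖u‖ = ‖π‖ ^ (j : ℕ)} = ENNReal.ofReal (1 - ‖π‖) := by
    intro j
    rw [Measure.restrict_apply (measurableSet_circle j),
      Set.inter_eq_left.2 (circle_subset hπ1 hπ0 hq j),
      multMeasure_circle hπ1 hπ0 hπmax hnorm hscale]
  have hcongr : heatMatrix π μ q n k ℓ = ∫ y in tateAnnulus q,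
      ∑ j : Fin n, {u : K | ‖u‖ = ‖π‖ ^ (j : ℕ)}.indicator (fun _ => c j) y
        ∂(multMeasure μ) := by
    refine setIntegral_congr_fun hA fun y hy => ?_
    obtain ⟨i, hi⟩ := exists_circle hπ1 hπ0 hπmax hq hy
    have hsum : ∑ j : Fin n, {u : K | ‖u‖ = ‖π‖ ^ (j : ℕ)}.indicator (fun _ => c j) y = c i := by
      rw [Finset.sum_eq_single i]
      · exact Set.indicator_of_mem (show y ∈ {u : K | ‖u‖ = ‖π‖ ^ (i : ℕ)} from hi) (fun _ => c i)
      · intro j _ hji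
        refine Set.indicator_of_notMem (fun hj => hji ?_) _
        rw [Set.mem_ofPred_eq, hi, norm_pow_inj hπ1 hπ0] at hj
        exact Fin.ext hj.symm
      · simp
    simp only [hsum]
    simp only [hc, hind i y hi, hind k (π ^ (k : ℕ)) (norm_pow _ _)]
    by_cases hik : k = i
    · simp [hik]
    · rw [thetaKernel_circle hπ1 hπ0 hq (fun e => hik (Fin.ext e)) hi]
  rw [hcongr, integral_finsetSum]
  · refine Finset.sum_congr rfl fun j _ => ?_
    rw [integral_indicator_const _ (measurableSet_circle j), Measure.real, hmeas,
      ENNReal.toReal_ofReal (sub_nonneg.2 hπ1.le), smul_eq_mul, mul_assoc]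
  · intro j _
    refine (integrable_indicator_iff (measurableSet_circle j)).2 (integrableOn_const ?_)
    rw [hmeas]
    exact ENNReal.ofReal_ne_top

end circles

/-- **The helpful matrix `L` is a graph Laplacian.**
The matrix `L` is symmetric and diagonalizable over `ℝ`; all of its nonzero eigenvalues
are negative, and its kernel (eigenspace for the eigenvalue `0`) consists exactly of
the constant vectors. -/
theorem heatMatrix_spectral_properties
    {K : Type*} [NontriviallyNormedField K] [CompleteSpace K] [IsUltrametricDist K]
    [MeasurableSpace K] [BorelSpace K]
    (hK : IsCompact (closedBall (0 : K) 1))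
    (π : K) (hπ1 : ‖π‖ < 1) (hπ0 : 0 < ‖π‖) (hπmax : ∀ x : K, ‖x‖ < 1 → ‖x‖ ≤ ‖π‖)
    (μ : MeasureTheory.Measure K) (hnorm : μ (closedBall (0 : K) 1) = 1)
    (hscale : ∀ a : K, a ≠ 0 → ∀ s : Set K, MeasurableSet s →
      μ ((a * ·) '' s) = ENNReal.ofReal ‖a‖ * μ s)
    (q : K) (n : ℕ) (hn : 3 ≤ n) (hq : ‖q‖ = ‖π‖ ^ n) :
    (heatMatrix π μ q n).IsSymm ∧
    (∃ (P : Matrix (Fin n) (Fin n) ℝ) (d : Fin n → ℝ),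
        IsUnit P.det ∧ heatMatrix π μ q n = P * Matrix.diagonal d * P⁻¹) ∧
    (∀ (c : ℝ) (v : Fin n → ℝ), v ≠ 0 → (heatMatrix π μ q n).mulVec v = c • v →
        c ≠ 0 → c < 0) ∧
    (∀ v : Fin n → ℝ, (heatMatrix π μ q n).mulVec v = 0 ↔ ∃ t : ℝ, v = fun _ => t) := by
  exact laplacian_spectral (fun k j => (1 - ‖π‖) * circleWeight ‖π‖ n k j)
    (fun k j => by simp only [circleWeight_comm ‖π‖ n k j])
    (fun k j => mul_pos (sub_pos.2 hπ1) (circleWeight_pos hπ0 n k j)) _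
    (fun k ℓ => heatMatrix_apply hπ1 hπ0 hπmax hnorm hscale hq k ℓ)
end

section
/- If f : X → ℝ is measurable, f(y) ≤ f(x₀) for all y ∈ X (f attains its maximum at x₀), f(x₀) > 0, and the functions y ↦ a(x₀,y), y ↦ b(x₀,y) and y ↦ a(x₀,y)·f(y) are μ-integrable, then Jf(x₀) = ∫_X (a(x₀,y)·f(y) − b(x₀,y)·f(x₀)) dμ(y) ≤ 0; that is, the operator J satisfies the positive maximum principle. -/
open MeasureTheory

/-- **Positive maximum principle for nonlocal operators.**
Let `(X, 𝒜, μ)` be a measure space and `a, b : X × X → ℝ` measurable kernels with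
`0 ≤ a(x,y) ≤ b(x,y)` (encoding the hypothesis `j₋(x,y) ≤ j₊(y,x)`). If a measurable
function `f : X → ℝ` attains its maximum at `x₀` with `f(x₀) > 0`, and the functions
`y ↦ a(x₀,y)`, `y ↦ b(x₀,y)`, `y ↦ a(x₀,y)·f(y)` are `μ`-integrable, then
`Jf(x₀) = ∫_X (a(x₀,y)·f(y) − b(x₀,y)·f(x₀)) dμ(y) ≤ 0`. -/
theorem positive_maximum_principle
    {X : Type*} [MeasurableSpace X] (μ : Measure X)
    (a b : X → X → ℝ)
    (ha_meas : Measurable (Function.uncurry a)) (hb_meas : Measurable (Function.uncurry b))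
    (hab : ∀ x y : X, 0 ≤ a x y ∧ a x y ≤ b x y)
    (f : X → ℝ) (hf : Measurable f)
    (x₀ : X) (hmax : ∀ y : X, f y ≤ f x₀) (hpos : 0 < f x₀)
    (ha : Integrable (fun y => a x₀ y) μ)
    (hb : Integrable (fun y => b x₀ y) μ)
    (haf : Integrable (fun y => a x₀ y * f y) μ) :
    ∫ y, (a x₀ y * f y - b x₀ y * f x₀) ∂μ ≤ 0 := by
  -- The integrand is pointwise nonpositive: `a f(y) ≤ a f(x₀) ≤ b f(x₀)`, using `0 ≤ a` for
  -- the first inequality and `0 < f x₀` for the second.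
  refine integral_nonpos fun y => sub_nonpos.mpr ?_
  obtain ⟨h0, hle⟩ := hab x₀ y
  exact (mul_le_mul_of_nonneg_left (hmax y) h0).trans
    (mul_le_mul_of_nonneg_right hle hpos.le)
end
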